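/- Let $t\ge 3$ be an integer. A family $\mathcal F$ of subsets of a finite set is $s$-cover-free if $A_0\not\subseteq A_1\cup\dots\cup A_s$ for any $s+1$ distinct members $A_0,A_1,\dots,A_s$ of $\mathcal F$. A binary code $C\subseteq\{0,1\}^N$ is $t$-frameproof if $\mathrm{desc}(D)\cap C=D$ for every $D\subseteq C$ with $|D|\le t$, where $\mathrm{desc}(D)=\{x\in\{0,1\}^N: x_i\in\{c_i:c\in D\}\text{ for all }i\}$. To exclude trivial cases, $s$-cover-free families are understood to have at least $s+1$ members and $t$-frameproof codes at least $t+1$ codewords. Let $N^*(s)$ denote the minimal $N$ such that there exists an $s$-cover-free family of more than $N$ subsets of an $N$-element set, and let $N(t)$ denote the minimal $N$ such that there exists a binary $t$-frameproof code of length $N$ with more than $N$ codewords. Then $N^*(t-2)$, $N(t)$ and $N^*(t)$ exist, and $N^*(t-2)\le N(t)\le N^*(t)$. -/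

import Mathlib

/-- The descendant set of a set `D` of words: all words `x` such that in every
coordinate `i`, the symbol `x i` appears as the `i`-th symbol of some word of `D`. -/
def descSet {N q : ℕ} (D : Finset (Fin N → Fin q)) : Set (Fin N → Fin q) :=
  {x | ∀ i : Fin N, ∃ c ∈ D, x i = c i}

/-- `C` is a `t`-frameproof code: for every `D ⊆ C` with `|D| ≤ t`, `desc(D) ∩ C = D`. -/
def IsFrameproof {N q : ℕ} (t : ℕ) (C : Finset (Fin N → Fin q)) : Prop :=
  ∀ D : Finset (Fin N → Fin q), D ⊆ C → D.card ≤ t →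
    descSet D ∩ (C : Set (Fin N → Fin q)) = (D : Set (Fin N → Fin q))

/-- A family `F` of finite sets is `t`-cover-free: for any `t + 1` distinct members
`A₀, A₁, …, A_t` (here `T = {A₁, …, A_t}`), `A₀` is not contained in `A₁ ∪ ⋯ ∪ A_t`. -/
def IsCoverFree {α : Type*} [DecidableEq α] (t : ℕ) (F : Finset (Finset α)) : Prop :=
  ∀ A₀ ∈ F, ∀ T ⊆ F.erase A₀, T.card = t → ¬ A₀ ⊆ T.sup id

/-- The sizes `N` of a ground set that carries an `s`-cover-free family of more than `N` members.
As usual the family is understood to be nontrivial, i.e. to have at least `s + 1` members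
(with at most `s` members, the defining condition is vacuous). -/
def coverFreeLengths (s : ℕ) : Set ℕ :=
  {N | ∃ F : Finset (Finset (Fin N)), IsCoverFree s F ∧ s < F.card ∧ N < F.card}

/-- The lengths `N` of binary `t`-frameproof codes with more than `N` codewords. As usual the code
is understood to be nontrivial, i.e. to have at least `t + 1` codewords; for `t ≥ 2` this excludes
only the code `{0, 1}` of length `1`. -/
def frameproofLengths (t : ℕ) : Set ℕ :=
  {N | ∃ C : Finset (Fin N → Fin 2), IsFrameproof t C ∧ t < C.card ∧ N < C.card}

/-- `N*(s)`: the minimal `N` such that there is an `s`-cover-free family of more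
than `N` subsets of an `N`-element set. -/
noncomputable def Nstar (s : ℕ) : ℕ := sInf (coverFreeLengths s)

/-- `N(t)`: the minimal `N` such that there is a binary `t`-frameproof code of
length `N` with more than `N` codewords. -/
noncomputable def Nfp (t : ℕ) : ℕ := sInf (frameproofLengths t)

/-!
For a binary word `a`, let `diffSet a x` be the set of coordinates in which `x` differs from `a`.
Since there are only two symbols, `x` is a descendant of `D ∪ {a}` if and only if `diffSet a x` is
covered by the sets `diffSet a c`, `c ∈ D`. Both inequalities follow.

* If the sets `diffSet 0 x`, `x ∈ C`, form a `t`-cover-free family, then `C` is `t`-frameproof; so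
  `N(t) ≤ N*(t)`.
* If `C` is `(s + 2)`-frameproof and `a, b ∈ C`, then the sets `diffSet a x \ diffSet a b` with
  `x ∈ C \ {a, b}` form an `s`-cover-free family. This loses two sets, which is harmless if
  `a` and `b` differ in at least two coordinates, because then the ground set loses as many points.
  Such `a` and `b` exist among any three words, since the three mutual distances have an even sum.

Cover-free families with more sets than points exist since two distinct polynomials of degree less
than `3` over `𝔽_p` agree in at most two points: if `2 * s < p`, then `s` of their graphs never
cover another one.
-/

section

open Finset

variable {ι κ α β : Type*}

section CoverFree

variable [DecidableEq α] [DecidableEq β] {s : ℕ} {I : Finset ι} {A : ι → Finset α}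

/-- Cover-free families with an index set: no `A x` with `x ∈ I` is covered by at most `s` sets
`A y` with `y ∈ I` and `y ≠ x`. Allowing fewer than `s` sets makes the condition meaningful even
when `I` has at most `s` elements, in contrast to `IsCoverFree`. -/
def IsIndexedCoverFree (s : ℕ) (I : Finset ι) (A : ι → Finset α) : Prop :=
  ∀ x ∈ I, ∀ D ⊆ I, #D ≤ s → A x ⊆ D.biUnion A → x ∈ D

theorem IsCoverFree.isIndexedCoverFree {F : Finset (Finset α)} (hF : IsCoverFree s F)
    (hs : s < #F) : IsIndexedCoverFree s F id := by
  intro A₀ hA₀ D hDF hDs hcov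
  by_contra hA₀D
  obtain ⟨T, hDT, hTF, hTs⟩ := exists_subsuperset_card_eq (subset_erase.2 ⟨hDF, hA₀D⟩) hDs
    (by rw [card_erase_of_mem hA₀]; omega)
  refine hF A₀ hA₀ T hTF hTs ?_
  rw [sup_eq_biUnion]
  exact hcov.trans (biUnion_subset_biUnion_of_subset_left id hDT)

namespace IsIndexedCoverFree

theorem isCoverFree_image (hA : IsIndexedCoverFree s I A) : IsCoverFree s (I.image A) := by
  intro A₀ hA₀ T hT hTs hcov
  obtain ⟨x, hx, rfl⟩ := mem_image.1 hA₀
  obtain ⟨hTI, hxT⟩ := subset_erase.1 hT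
  obtain ⟨D, hDI, hDinj, rfl⟩ := exists_subset_injOn_image_eq_of_surjOn (f := A) I T
    fun B hB => by simpa using hTI hB
  rw [card_image_of_injOn hDinj] at hTs
  rw [sup_eq_biUnion, image_biUnion] at hcov
  exact hxT (mem_image_of_mem A (hA x hx D (mod_cast hDI) hTs.le hcov))

theorem injOn (hs : 1 ≤ s) (hA : IsIndexedCoverFree s I A) : Set.InjOn A I := fun x hx y hy hxy =>
  mem_singleton.1 <| hA x hx {y} (singleton_subset_iff.2 hy) (by simpa using hs) (by simp [hxy])

theorem comp_of_injOn {J : Finset κ} {g : κ → ι} (hA : IsIndexedCoverFree s I A)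
    (hg : Set.InjOn g J) (hgI : Set.MapsTo g J I) : IsIndexedCoverFree s J (A ∘ g) := by
  classical
  intro x hx D hDJ hDs hcov
  obtain ⟨y, hyD, hyx⟩ := mem_image.1 <| hA (g x) (hgI hx) (D.image g)
    (image_subset_iff.2 fun y hy => hgI (hDJ hy)) (card_image_le.trans hDs)
    (by rwa [image_biUnion])
  rwa [← hg (hDJ hyD) hx hyx]

theorem map_embedding (hA : IsIndexedCoverFree s I A) (e : α ↪ β) :
    IsIndexedCoverFree s I fun x => (A x).map e := by
  refine fun x hx D hDI hDs hcov => hA x hx D hDI hDs fun i hi => ?_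
  simpa only [mem_biUnion, mem_map'] using hcov (mem_map_of_mem e hi)

theorem card_mem_coverFreeLengths [Fintype α] (hs : 1 ≤ s) (hA : IsIndexedCoverFree s I A)
    (hsI : s < #I) (hαI : Fintype.card α < #I) : Fintype.card α ∈ coverFreeLengths s := by
  have hB := hA.map_embedding (Fintype.equivFin α).toEmbedding
  have hcard := card_image_of_injOn (hB.injOn hs)
  exact ⟨_, hB.isCoverFree_image, by rwa [hcard], by rwa [hcard]⟩

end IsIndexedCoverFree

end CoverFree

section Polynomials

theorem isIndexedCoverFree_graph [Fintype κ] [Fintype β] [DecidableEq κ] [DecidableEq β]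
    {s d : ℕ} {I : Finset ι} {f : ι → κ → β}
    (hf : ∀ x ∈ I, ∀ y ∈ I, x ≠ y → #{k | f x k = f y k} ≤ d) (hd : s * d < Fintype.card κ) :
    IsIndexedCoverFree s I fun x => ({z | f x z.1 = z.2} : Finset (κ × β)) := by
  intro x hx D hDI hDs hcov
  by_contra hxD
  have hagree : (univ : Finset κ) ⊆ D.biUnion fun y => {k | f x k = f y k} := fun k _ => by
    obtain ⟨y, hy, hk⟩ := mem_biUnion.1 (hcov (mem_filter_univ (k, f x k) |>.2 rfl))
    exact mem_biUnion.2 ⟨y, hy, by simpa [eq_comm] using hk⟩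
  refine hd.not_ge ?_
  calc Fintype.card κ ≤ #(D.biUnion fun y => {k | f x k = f y k}) := card_le_card hagree
    _ ≤ #D * d := card_biUnion_le_card_mul _ _ _ fun y hy =>
      hf x hx y (hDI hy) (ne_of_mem_of_not_mem hy hxD).symm
    _ ≤ s * d := Nat.mul_le_mul_right d hDs

open Polynomial in
theorem card_eval_eq_le_of_degree_le {R : Type*} [CommRing R] [IsDomain R] [Fintype R]
    [DecidableEq R] {d : ℕ} {P Q : R[X]} (hP : P.degree ≤ d) (hQ : Q.degree ≤ d) (h : P ≠ Q) :
    #{r | P.eval r = Q.eval r} ≤ d := by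
  contrapose! h
  exact eq_of_degrees_lt_of_eval_finset_eq _ (hP.trans_lt (mod_cast h)) (hQ.trans_lt (mod_cast h))
    fun r hr => (mem_filter.1 hr).2

open Polynomial in
theorem coverFreeLengths_nonempty {s : ℕ} (hs : 1 ≤ s) : (coverFreeLengths s).Nonempty := by
  obtain ⟨p, hsp, hp⟩ := Nat.exists_infinite_primes (s * 2 + 1)
  have : Fact p.Prime := ⟨hp⟩
  let P (c : Fin 3 → ZMod p) : degreeLT (ZMod p) 3 := (degreeLTEquiv (ZMod p) 3).symm c
  have hPdeg (c) : (P c : (ZMod p)[X]).degree ≤ (2 : ℕ) := by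
    rw [← mem_degreeLE, ← degreeLT_succ_eq_degreeLE]
    exact (P c).2
  have hgraph := isIndexedCoverFree_graph (s := s) (d := 2) (I := univ)
    (f := fun c x => (P c : (ZMod p)[X]).eval x)
    (fun c _ c' _ hcc' => card_eval_eq_le_of_degree_le (hPdeg c) (hPdeg c')
      fun h => hcc' ((degreeLTEquiv (ZMod p) 3).symm.injective (Subtype.ext h)))
    (by rwa [ZMod.card])
  have hcard : #(univ : Finset (Fin 3 → ZMod p)) = p ^ 3 := by simp [ZMod.card]
  refine ⟨_, hgraph.card_mem_coverFreeLengths hs ?_ ?_⟩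
  · rw [hcard]
    calc s < p := by omega
      _ ≤ p ^ 3 := Nat.le_self_pow three_ne_zero p
  · rw [hcard, Fintype.card_prod, ZMod.card, ← sq]
    exact Nat.pow_lt_pow_right hp.one_lt (by norm_num)

end Polynomials

section BinaryWords

/-- The set of coordinates in which the word `x` differs from the reference word `a`; for binary
words and `a = 0` it is the support of `x`, so that `x` is its characteristic vector. -/
def diffSet [Fintype ι] [DecidableEq β] (a x : ι → β) : Finset ι := {i | x i ≠ a i}

theorem mem_diffSet [Fintype ι] [DecidableEq β] {a x : ι → β} {i : ι} :
    i ∈ diffSet a x ↔ x i ≠ a i := by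
  simp [diffSet]

theorem card_diffSet [Fintype ι] [DecidableEq β] (a x : ι → β) :
    #(diffSet a x) = hammingDist x a := rfl

theorem diffSet_bijective [Fintype ι] (a : ι → Fin 2) :
    Function.Bijective (diffSet a) := by
  classical
  refine (Fintype.bijective_iff_injective_and_card _).2 ⟨fun x y hxy => funext fun i => ?_, ?_⟩
  · have hi : x i ≠ a i ↔ y i ≠ a i := by rw [← mem_diffSet, ← mem_diffSet, hxy]
    omega
  · simp

theorem even_hammingDist_add_add [Fintype ι] (x y z : ι → Fin 2) :
    Even (hammingDist x y + hammingDist y z + hammingDist x z) := by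
  simp only [hammingDist, card_filter, ← sum_add_distrib]
  refine even_sum _ fun i _ => ?_
  generalize x i = u, y i = v, z i = w
  decide +revert

theorem exists_two_le_hammingDist [Fintype ι] {C : Finset (ι → Fin 2)} (hC : 2 < #C) :
    ∃ x ∈ C, ∃ y ∈ C, 2 ≤ hammingDist x y := by
  obtain ⟨x, y, z, hx, hy, hz, hxy, hxz, hyz⟩ := two_lt_card_iff.1 hC
  by_contra! h
  obtain ⟨k, hk⟩ := even_hammingDist_add_add x y z
  have := h x hx y hy
  have := h y hy z hz
  have := h x hx z hz
  have := hammingDist_pos.2 hxy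
  have := hammingDist_pos.2 hyz
  have := hammingDist_pos.2 hxz
  omega

end BinaryWords

section Frameproof

theorem isFrameproof_iff {N q t : ℕ} {C : Finset (Fin N → Fin q)} :
    IsFrameproof t C ↔ ∀ x ∈ C, ∀ D ⊆ C, #D ≤ t → x ∈ descSet D → x ∈ D := by
  refine ⟨fun hC x hx D hDC hDt hxD => mem_coe.1 (hC D hDC hDt ▸ ⟨hxD, hx⟩),
    fun h D hDC hDt => Set.Subset.antisymm (fun x hx => h x hx.2 D hDC hDt hx.1) ?_⟩
  exact fun x hx => ⟨fun i => ⟨x, hx, rfl⟩, hDC hx⟩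

theorem descSet_mono {N q : ℕ} {D E : Finset (Fin N → Fin q)} (h : D ⊆ E) :
    descSet D ⊆ descSet E := fun _ hx i =>
  let ⟨c, hc, hci⟩ := hx i
  ⟨c, h hc, hci⟩

variable {N s t : ℕ} {C : Finset (Fin N → Fin 2)} {a b : Fin N → Fin 2}

theorem mem_descSet_insert_iff {D : Finset (Fin N → Fin 2)} {x : Fin N → Fin 2} :
    x ∈ descSet (insert a D) ↔ diffSet a x ⊆ D.biUnion (diffSet a) := by
  simp only [descSet, Set.mem_ofPred_eq, exists_mem_insert, subset_iff, mem_biUnion, mem_diffSet]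
  refine forall_congr' fun i => or_iff_not_imp_left.trans <| imp_congr_right fun hxa =>
    exists_congr fun c => and_congr_right fun _ => ?_
  omega

theorem isFrameproof_of_isIndexedCoverFree_diffSet (h : IsIndexedCoverFree t C (diffSet a)) :
    IsFrameproof t C :=
  isFrameproof_iff.2 fun x hx D hDC hDt hxD =>
    h x hx D hDC hDt (mem_descSet_insert_iff.1 (descSet_mono (subset_insert a D) hxD))

theorem IsFrameproof.isIndexedCoverFree_diffSet (hC : IsFrameproof (s + 2) C) (ha : a ∈ C)
    (hb : b ∈ C) : IsIndexedCoverFree s (C \ {a, b})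
      fun x => (diffSet a x).subtype (· ∉ diffSet a b) := by
  intro x hx D hD hDs hcov
  obtain ⟨hxC, hxab⟩ := mem_sdiff.1 hx
  have hxdesc : x ∈ descSet (insert a (insert b D)) := by
    rw [mem_descSet_insert_iff, biUnion_insert]
    intro i hi
    by_cases hib : i ∈ diffSet a b
    · exact mem_union_left _ hib
    · have hiD := @hcov ⟨i, hib⟩ (mem_subtype.2 hi)
      simp only [mem_biUnion, mem_subtype] at hiD
      exact mem_union_right _ (mem_biUnion.2 hiD)
  have hDC : insert a (insert b D) ⊆ C := insert_subset ha <| insert_subset hb <|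
    hD.trans sdiff_subset
  have hcard : #(insert a (insert b D)) ≤ s + 2 :=
    (card_insert_le _ _).trans (Nat.succ_le_succ ((card_insert_le _ _).trans (by omega)))
  have hxmem := isFrameproof_iff.1 hC x hxC _ hDC hcard hxdesc
  simp only [mem_insert, mem_singleton] at hxmem hxab
  tauto

theorem coverFreeLengths_subset_frameproofLengths (t : ℕ) :
    coverFreeLengths t ⊆ frameproofLengths t := by
  rintro N ⟨F, hF, htF, hNF⟩
  have hbij := diffSet_bijective (0 : Fin N → Fin 2)
  obtain ⟨C, -, hinj, rfl⟩ := exists_subset_injOn_image_eq_of_surjOn Set.univ F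
    (hbij.surjective.surjOn.mono subset_rfl (Set.subset_univ _))
  have hdiff := (hF.isIndexedCoverFree htF).comp_of_injOn hinj fun x hx => mem_image_of_mem _ hx
  rw [card_image_of_injOn hinj] at htF hNF
  exact ⟨C, isFrameproof_of_isIndexedCoverFree_diffSet hdiff, htF, hNF⟩

theorem exists_le_mem_coverFreeLengths_of_mem_frameproofLengths (hs : 1 ≤ s)
    (hN : N ∈ frameproofLengths (s + 2)) : ∃ M ≤ N, M ∈ coverFreeLengths s := by
  obtain ⟨C, hC, hsC, hNC⟩ := hN
  obtain ⟨b, hb, a, ha, hba⟩ := exists_two_le_hammingDist (C := C) (by omega)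
  have hcard : #C ≤ #(C \ {a, b}) + 2 :=
    card_le_card_sdiff_add_card.trans (Nat.add_le_add_left card_le_two _)
  have hground : Fintype.card {i // i ∉ diffSet a b} = N - hammingDist b a := by
    rw [Fintype.card_subtype_compl, Fintype.card_fin, Fintype.card_coe, card_diffSet]
  exact ⟨_, by omega, (hC.isIndexedCoverFree_diffSet ha hb).card_mem_coverFreeLengths hs
    (by omega) (by omega)⟩

end Frameproof

end

/-- For `t ≥ 3` the minima `N*(t-2)`, `N(t)`, `N*(t)` are attained and
`N*(t-2) ≤ N(t) ≤ N*(t)`. -/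
theorem stmt_5 (t : ℕ) (ht : 3 ≤ t) :
    (coverFreeLengths (t - 2)).Nonempty ∧ (frameproofLengths t).Nonempty ∧
      (coverFreeLengths t).Nonempty ∧
      Nstar (t - 2) ≤ Nfp t ∧ Nfp t ≤ Nstar t := by
  obtain ⟨s, rfl⟩ : ∃ s, t = s + 2 := ⟨t - 2, by omega⟩
  have hs : 1 ≤ s := by omega
  have hsub := coverFreeLengths_subset_frameproofLengths (s + 2)
  have hcf : (coverFreeLengths (s + 2)).Nonempty := coverFreeLengths_nonempty (by omega)
  have hfp : (frameproofLengths (s + 2)).Nonempty := hcf.mono hsub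
  rw [Nat.add_sub_cancel]
  refine ⟨coverFreeLengths_nonempty hs, hfp, hcf, ?_, Nat.sInf_le (hsub (Nat.sInf_mem hcf))⟩
  obtain ⟨M, hMN, hM⟩ :=
    exists_le_mem_coverFreeLengths_of_mem_frameproofLengths hs (Nat.sInf_mem hfp)
  exact (Nat.sInf_le hM).trans hMN
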